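/- Let B be a unital commutative associative algebra over F, V a B-module, and ⟨·,·⟩ : V × V → B a skew-symmetric B-bilinear map such that w⟨u,v⟩ + u⟨v,w⟩ + v⟨w,u⟩ = 0 for all u,v,w ∈ V. Then the algebra M = sl2(B) ⊕ V² with the product defined in the construction is a Malcev algebra over F (its product is anticommutative with X·X = 0 and satisfies the Malcev identity (XZ)(YT) = ((XY)Z)T + ((YZ)T)X + ((ZT)X)Y + ((TX)Y)Z), and it contains sl2(B) (in particular sl2(F)) as a subalgebra. -/

import Mathlib

section
variable (K : Type*) [Field K] (B : Type*) [CommRing B] [Algebra K B]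

/-- `sl2(B)`: trace-zero 2×2 matrices over `B` -/
def sl2T (B : Type*) [CommRing B] : Submodule B (Matrix (Fin 2) (Fin 2) B) :=
  LinearMap.ker (Matrix.traceLinearMap (Fin 2) B B)

lemma comm_mem_sl2T {B : Type*} [CommRing B] (A A' : Matrix (Fin 2) (Fin 2) B) :
    A * A' - A' * A ∈ sl2T B := by
  rw [sl2T, LinearMap.mem_ker, Matrix.traceLinearMap_apply, Matrix.trace_sub,
    Matrix.trace_mul_comm, sub_self]

variable (V : Type*) [AddCommGroup V] [Module B V]

/-- the right action `(u,v)A = (au − bv, cu − av)` for `A = (1/2)[[a,−b],[c,−a]]` -/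
def actV {B V : Type*} [CommRing B] [AddCommGroup V] [Module B V]
    (A : Matrix (Fin 2) (Fin 2) B) (p : V × V) : V × V :=
  ((2 : B) • (A 0 0 • p.1 + A 0 1 • p.2), (2 : B) • (A 1 0 • p.1 - A 0 0 • p.2))

/-- the `sl2(B)`-component of the product on `sl2(B) ⊕ V²` -/
noncomputable def conMulMat (bk : V → V → B)
    (X Y : ↥(sl2T B) × V × V) : Matrix (Fin 2) (Fin 2) B :=
  (X.1 : Matrix (Fin 2) (Fin 2) B) * (Y.1 : Matrix (Fin 2) (Fin 2) B) -
    (Y.1 : Matrix (Fin 2) (Fin 2) B) * (X.1 : Matrix (Fin 2) (Fin 2) B) +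
    algebraMap K B 2⁻¹ •
      !![algebraMap K B 2⁻¹ * (bk X.2.1 Y.2.2 + bk X.2.2 Y.2.1), -(bk X.2.1 Y.2.1);
         bk X.2.2 Y.2.2, -(algebraMap K B 2⁻¹ * (bk X.2.1 Y.2.2 + bk X.2.2 Y.2.1))]

lemma conMulMat_mem (bk : V → V → B) (X Y : ↥(sl2T B) × V × V) :
    conMulMat K B V bk X Y ∈ sl2T B := by
  rw [sl2T, LinearMap.mem_ker, Matrix.traceLinearMap_apply, conMulMat, Matrix.trace_add,
    Matrix.trace_sub, Matrix.trace_mul_comm, Matrix.trace_smul, Matrix.trace_fin_two]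
  simp

/-- the product of the construction `sl2(B) ⊕ V²` -/
noncomputable def conMul (bk : V → V → B) (X Y : ↥(sl2T B) × V × V) :
    ↥(sl2T B) × V × V :=
  (⟨conMulMat K B V bk X Y, conMulMat_mem K B V bk X Y⟩,
    actV (Y.1 : Matrix (Fin 2) (Fin 2) B) X.2 - actV (X.1 : Matrix (Fin 2) (Fin 2) B) Y.2)

/-- the symplectic involution on `M₂(B)` -/
def sympl {B : Type*} [CommRing B] (A : Matrix (Fin 2) (Fin 2) B) : Matrix (Fin 2) (Fin 2) B :=
  !![A 1 1, -(A 0 1); -(A 1 0), A 0 0]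

/-- the `sl2(B)`-component of the product of `M̃(sl2(B), α)` -/
def mtMulMat {B : Type*} [CommRing B] (α : B)
    (X Y : ↥(sl2T B) × Matrix (Fin 2) (Fin 2) B) : Matrix (Fin 2) (Fin 2) B :=
  (X.1 : Matrix (Fin 2) (Fin 2) B) * (Y.1 : Matrix (Fin 2) (Fin 2) B) -
    (Y.1 : Matrix (Fin 2) (Fin 2) B) * (X.1 : Matrix (Fin 2) (Fin 2) B) +
    α • (Y.2 * sympl X.2 - X.2 * sympl Y.2)

lemma mtMulMat_mem {B : Type*} [CommRing B] (α : B)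
    (X Y : ↥(sl2T B) × Matrix (Fin 2) (Fin 2) B) : mtMulMat α X Y ∈ sl2T B := by
  have h2 : Matrix.trace (α • (Y.2 * sympl X.2 - X.2 * sympl Y.2)) = 0 := by
    rw [Matrix.trace_smul, Matrix.trace_sub, Matrix.trace_fin_two, Matrix.trace_fin_two]
    simp [Matrix.mul_apply, Fin.sum_univ_two, sympl]
    ring_nf
  rw [sl2T, LinearMap.mem_ker, Matrix.traceLinearMap_apply, mtMulMat, Matrix.trace_add,
    Matrix.trace_sub, Matrix.trace_mul_comm, sub_self, zero_add, h2]

/-- the product of `M̃(sl2(B), α) = sl2(B) ⊕ vM₂(B)`: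
`A·B = AB − BA`, `A·(vB) = v(A*B − AB)`, `(vA)·(vB) = α(BA* − AB*)`. -/
def mtMul {B : Type*} [CommRing B] (α : B)
    (X Y : ↥(sl2T B) × Matrix (Fin 2) (Fin 2) B) :
    ↥(sl2T B) × Matrix (Fin 2) (Fin 2) B :=
  (⟨mtMulMat α X Y, mtMulMat_mem α X Y⟩,
    sympl (X.1 : Matrix (Fin 2) (Fin 2) B) * Y.2 - (X.1 : Matrix (Fin 2) (Fin 2) B) * Y.2 +
      ((Y.1 : Matrix (Fin 2) (Fin 2) B) * X.2 - sympl (Y.1 : Matrix (Fin 2) (Fin 2) B) * X.2))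

/-- the product of the exceptional Malcev algebra `M₇(B) = sl2(B) ⊕ vM₂(B)` -/
def m7Mul {B : Type*} [CommRing B] (X Y : ↥(sl2T B) × Matrix (Fin 2) (Fin 2) B) :
    ↥(sl2T B) × Matrix (Fin 2) (Fin 2) B := mtMul (1 : B) X Y


section CoordMul

variable {B V : Type*} [CommRing B] [AddCommGroup V] [Module B V] (β : V →ₗ[B] V →ₗ[B] B)

/-- The product of `sl₂(B) ⊕ V²` in the coordinates `(p, q, r, x, y)`, which stand for the matrix
`[[p, q], [r, -p]]` and the pair `(x, y)`; here `β` is a quarter of the bracket on `V`. -/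
def coordMul (X Y : B × B × B × V × V) : B × B × B × V × V :=
  let (p, q, r, x, y) := X
  let (p', q', r', x', y') := Y
  (q * r' - q' * r + (β x y' + β y x'),
    2 * (p * q' - p' * q - β x x'),
    2 * (r * p' - r' * p + β y y'),
    (2 : B) • (p' • x + q' • y - (p • x' + q • y')),
    (2 : B) • (r' • x - p' • y - (r • x' - p • y')))

variable {β}

lemma coordMul_self (h : ∀ u, β u u = 0) (skew : ∀ u v, β u v = -β v u)
    (X : B × B × B × V × V) : coordMul β X X = 0 := by
  obtain ⟨p, q, r, x, y⟩ := X
  simp only [coordMul, Prod.mk_eq_zero, h, skew y x]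
  refine ⟨by ring, by ring, by ring, by module, by module⟩

lemma coordMul_anticomm (skew : ∀ u v, β u v = -β v u) (X Y : B × B × B × V × V) :
    coordMul β X Y = -coordMul β Y X := by
  obtain ⟨p, q, r, x, y⟩ := X
  obtain ⟨p', q', r', x', y'⟩ := Y
  simp only [coordMul, Prod.neg_mk, Prod.mk.injEq, skew x' _, skew y' _]
  refine ⟨by ring, by ring, by ring, by module, by module⟩

lemma coordMul_add_left (X Y Z : B × B × B × V × V) :
    coordMul β X Z + coordMul β Y Z = coordMul β (X + Y) Z := by
  obtain ⟨p, q, r, x, y⟩ := X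
  obtain ⟨p', q', r', x', y'⟩ := Y
  obtain ⟨p'', q'', r'', x'', y''⟩ := Z
  simp only [coordMul, Prod.mk_add_mk, Prod.mk.injEq, map_add, LinearMap.add_apply]
  refine ⟨by ring, by ring, by ring, by module, by module⟩

set_option maxHeartbeats 4000000 in
lemma coordMul_malcev (skew : ∀ u v, β u v = -β v u)
    (hcyc : ∀ u v w, β u v • w + β v w • u + β w u • v = 0) (X Y Z W : B × B × B × V × V) :
    coordMul β (coordMul β X Z) (coordMul β Y W) =
      coordMul β (coordMul β (coordMul β X Y) Z) W +
      coordMul β (coordMul β (coordMul β Y Z) W) X +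
      coordMul β (coordMul β (coordMul β Z W) X) Y +
      coordMul β (coordMul β (coordMul β W X) Y) Z := by
  have cyclic (u v w : V) : β u v • w + β v w • u - β u w • v = 0 := by
    rw [← hcyc u v w, skew w u, neg_smul, sub_eq_add_neg]
  have pluecker (u v w t : V) : β u v * β w t - β u w * β v t + β u t * β v w = 0 := by
    have h := congrArg (β · t) (cyclic u v w)
    simp only [map_add, map_sub, map_smul, LinearMap.add_apply, LinearMap.sub_apply,
      LinearMap.smul_apply, smul_eq_mul, map_zero, LinearMap.zero_apply] at h
    linear_combination h
  obtain ⟨p0, q0, r0, x0, y0⟩ := X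
  obtain ⟨p1, q1, r1, x1, y1⟩ := Y
  obtain ⟨p2, q2, r2, x2, y2⟩ := Z
  obtain ⟨p3, q3, r3, x3, y3⟩ := W
  simp only [coordMul, Prod.mk_add_mk, Prod.mk.injEq, map_add, map_sub, map_smul,
    LinearMap.add_apply, LinearMap.sub_apply, LinearMap.smul_apply, smul_eq_mul,
    skew x1 x0, skew x1 y0, skew y1 x0, skew y1 y0, skew x2 x0, skew x2 y0,
    skew x2 x1, skew x2 y1, skew y2 x0, skew y2 y0, skew y2 x1, skew y2 y1,
    skew x3 x0, skew x3 y0, skew x3 x1, skew x3 y1, skew x3 x2, skew x3 y2,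
    skew y3 x0, skew y3 y0, skew y3 x1, skew y3 y1, skew y3 x2, skew y3 y2]
  refine ⟨?_, ?_, ?_, ?_, ?_⟩
  · linear_combination 4 * pluecker x0 y1 x2 y3 - 4 * pluecker y0 x1 y2 x3
  · linear_combination -4 * pluecker x0 x1 x2 y3 + 4 * pluecker x0 x1 y2 x3
      - 4 * pluecker x0 y1 x2 x3 + 4 * pluecker y0 x1 x2 x3
  · linear_combination 4 * pluecker x0 y1 y2 y3 - 4 * pluecker y0 x1 y2 y3
      + 4 * pluecker y0 y1 x2 y3 - 4 * pluecker y0 y1 y2 x3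
  · linear_combination (norm := module)
      (-4 * r3) • cyclic x0 x1 x2 + (-4 * r2) • cyclic x0 x1 x3 + (8 * p2) • cyclic x0 x1 y3
      + (-4 * q3) • cyclic x0 y1 y2 + (4 * q2) • cyclic x0 y1 y3 + (-4 * r1) • cyclic x0 x2 x3
      + (8 * p1) • cyclic x0 y2 x3 + (4 * q1) • cyclic x0 y2 y3 + (8 * p3) • cyclic y0 x1 x2
      + (4 * q3) • cyclic y0 x1 y2 + (4 * q2) • cyclic y0 x1 y3 + (4 * q3) • cyclic y0 y1 x2
      + (-4 * q2) • cyclic y0 y1 x3 + (-4 * q1) • cyclic y0 x2 y3 + (4 * q1) • cyclic y0 y2 x3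
      + (-4 * r0) • cyclic x1 x2 x3 + (-4 * q0) • cyclic x1 y2 y3 + (8 * p0) • cyclic y1 x2 x3
      + (4 * q0) • cyclic y1 x2 y3 + (4 * q0) • cyclic y1 y2 x3
  · linear_combination (norm := module)
      (-4 * r3) • cyclic x0 x1 y2 + (4 * r2) • cyclic x0 x1 y3 + (-4 * r3) • cyclic x0 y1 x2
      + (8 * p3) • cyclic x0 y1 y2 + (-4 * r2) • cyclic x0 y1 x3 + (-4 * r1) • cyclic x0 x2 y3
      + (4 * r1) • cyclic x0 y2 x3 + (4 * r3) • cyclic y0 x1 x2 + (-4 * r2) • cyclic y0 x1 x3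
      + (4 * q3) • cyclic y0 y1 y2 + (8 * p2) • cyclic y0 y1 x3 + (4 * q2) • cyclic y0 y1 y3
      + (-4 * r1) • cyclic y0 x2 x3 + (8 * p1) • cyclic y0 x2 y3 + (4 * q1) • cyclic y0 y2 y3
      + (-4 * r0) • cyclic x1 x2 y3 + (-4 * r0) • cyclic x1 y2 x3 + (8 * p0) • cyclic x1 y2 y3
      + (4 * r0) • cyclic y1 x2 x3 + (4 * q0) • cyclic y1 y2 y3

end CoordMul

/-- The coordinates `(p, q, r, x, y)` of an element of `sl₂(B) ⊕ V²`. -/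
def sl2Coords {B V : Type*} [CommRing B] [AddCommGroup V] [Module B V] :
    ↥(sl2T B) × V × V →+ B × B × B × V × V where
  toFun X := (X.1.1 0 0, X.1.1 0 1, X.1.1 1 0, X.2.1, X.2.2)
  map_zero' := rfl
  map_add' _ _ := rfl

lemma sl2Coords_mk {B V : Type*} [CommRing B] [AddCommGroup V] [Module B V] (A : ↥(sl2T B))
    (v : V × V) : sl2Coords (A, v) = (A.1 0 0, A.1 0 1, A.1 1 0, v.1, v.2) := rfl

lemma sl2T_apply_one_one {B : Type*} [CommRing B] (A : ↥(sl2T B)) : A.1 1 1 = -A.1 0 0 := by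
  have h : Matrix.trace A.1 = 0 := A.2
  rw [Matrix.trace_fin_two] at h
  linear_combination h

lemma sl2Coords_injective {B V : Type*} [CommRing B] [AddCommGroup V] [Module B V] :
    Function.Injective (sl2Coords : ↥(sl2T B) × V × V →+ B × B × B × V × V) := by
  rintro ⟨A, x, y⟩ ⟨A', x', y'⟩ h
  simp only [sl2Coords_mk, Prod.mk.injEq] at h
  obtain ⟨hp, hq, hr, rfl, rfl⟩ := h
  refine Prod.ext (Subtype.ext (Matrix.ext fun i j ↦ ?_)) rfl
  fin_cases i <;> fin_cases j
  · exact hp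
  · exact hq
  · exact hr
  · exact (sl2T_apply_one_one A).trans (by rw [hp, ← sl2T_apply_one_one]; rfl)

lemma sl2Coords_conMul {K : Type*} [Field K] {B : Type*} [CommRing B] [Algebra K B]
    {V : Type*} [AddCommGroup V] [Module B V] (h2 : (2 : K) ≠ 0) (bk : V → V → B)
    (β : V →ₗ[B] V →ₗ[B] B) (hβ : ∀ u v, bk u v = 4 * β u v) (X Y : ↥(sl2T B) × V × V) :
    sl2Coords (conMul K B V bk X Y) = coordMul β (sl2Coords X) (sl2Coords Y) := by
  have half : 2 * algebraMap K B 2⁻¹ = 1 := by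
    rw [← map_ofNat (algebraMap K B) 2, ← map_mul, mul_inv_cancel₀ h2, map_one]
  obtain ⟨A, x, y⟩ := X
  obtain ⟨A', x', y'⟩ := Y
  simp only [sl2Coords_mk, conMul, conMulMat, actV, coordMul,
    Prod.mk.injEq, Prod.fst_sub, Prod.snd_sub, Matrix.add_apply, Matrix.sub_apply,
    Matrix.smul_apply, Matrix.mul_apply, Fin.sum_univ_two, Matrix.of_apply, Matrix.cons_val_zero,
    Matrix.cons_val_one, Matrix.cons_val', smul_eq_mul, hβ, sl2T_apply_one_one]
  generalize algebraMap K B 2⁻¹ = c at half ⊢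
  refine ⟨?_, ?_, ?_, by module, by module⟩
  · linear_combination (2 * c + 1) * (β x y' + β y x') * half
  · linear_combination -2 * β x x' * half
  · linear_combination 2 * β y y' * half

section
variable {K : Type*} [Field K] {B : Type*} [CommRing B] [Algebra K B]
  {V : Type*} [AddCommGroup V] [Module B V] [Module K V] [IsScalarTower K B V]

/-- For a commutative associative unital `F`-algebra `B`, a `B`-module
`V` and a skew-symmetric `B`-bilinear map `⟨·,·⟩ : V × V → B` with
`w⟨u,v⟩ + u⟨v,w⟩ + v⟨w,u⟩ = 0`, the algebra `sl₂(B) ⊕ V²` of the construction is a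
Malcev algebra over `F` containing `sl₂(B)` as a subalgebra. -/
theorem stmt9
    (h2 : (2 : K) ≠ 0) (h3 : (3 : K) ≠ 0)
    (bk : V → V → B)
    (hskew : ∀ u v : V, bk u v = -(bk v u))
    (hlin : ∀ (b : B) (u u' v : V),
      bk (b • u + u') v = b * bk u v + bk u' v ∧ bk v (b • u + u') = b * bk v u + bk v u')
    (hcyc : ∀ u v w : V, bk u v • w + bk v w • u + bk w u • v = 0) :
    (∀ X : ↥(sl2T B) × V × V, conMul K B V bk X X = 0) ∧
    (∀ X Y : ↥(sl2T B) × V × V, conMul K B V bk X Y = -(conMul K B V bk Y X)) ∧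
    (∀ X Y Z W : ↥(sl2T B) × V × V, conMul K B V bk X Z + conMul K B V bk Y Z =
      conMul K B V bk (X + Y) Z) ∧
    (∀ X Y Z W : ↥(sl2T B) × V × V,
      conMul K B V bk (conMul K B V bk X Z) (conMul K B V bk Y W) =
        conMul K B V bk (conMul K B V bk (conMul K B V bk X Y) Z) W +
        conMul K B V bk (conMul K B V bk (conMul K B V bk Y Z) W) X +
        conMul K B V bk (conMul K B V bk (conMul K B V bk Z W) X) Y +
        conMul K B V bk (conMul K B V bk (conMul K B V bk W X) Y) Z) ∧
    (∀ A A' : ↥(sl2T B), conMul K B V bk (A, (0 : V × V)) (A', (0 : V × V)) =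
      (⟨(A : Matrix (Fin 2) (Fin 2) B) * (A' : Matrix (Fin 2) (Fin 2) B) -
          (A' : Matrix (Fin 2) (Fin 2) B) * (A : Matrix (Fin 2) (Fin 2) B),
        comm_mem_sl2T _ _⟩, (0 : V × V))) := by
  have quarter : 4 * algebraMap K B 4⁻¹ = 1 := by
    have h4 : (4 : K) ≠ 0 := by
      rw [show (4 : K) = 2 * 2 by norm_num]
      exact mul_ne_zero h2 h2
    rw [← map_ofNat (algebraMap K B) 4, ← map_mul, mul_inv_cancel₀ h4, map_one]
  have hadd (u u' v : V) : bk (u + u') v = bk u v + bk u' v := by simpa using (hlin 1 u u' v).1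
  have hadd' (u v v' : V) : bk u (v + v') = bk u v + bk u v' := by simpa using (hlin 1 v v' u).2
  have hzero (v : V) : bk 0 v = 0 := by simpa using hadd 0 0 v
  have hzero' (v : V) : bk v 0 = 0 := by simpa using hadd' v 0 0
  have hsmul (b : B) (u v : V) : bk (b • u) v = b * bk u v := by
    simpa [hzero] using (hlin b u 0 v).1
  have hsmul' (b : B) (u v : V) : bk u (b • v) = b * bk u v := by
    simpa [hzero'] using (hlin b v 0 u).2
  let β : V →ₗ[B] V →ₗ[B] B := algebraMap K B 4⁻¹ • LinearMap.mk₂ B bk hadd hsmul hadd' hsmul'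
  have hβ' (u v : V) : β u v = algebraMap K B 4⁻¹ * bk u v := rfl
  have hβ (u v : V) : bk u v = 4 * β u v := by
    rw [hβ']
    linear_combination -bk u v * quarter
  have skew (u v : V) : β u v = -β v u := by rw [hβ', hβ', hskew u v, mul_neg]
  have alt (u : V) : β u u = 0 := by
    linear_combination -β u u * quarter + 2 * algebraMap K B 4⁻¹ * skew u u
  have cyc (u v w : V) : β u v • w + β v w • u + β w u • v = 0 := by
    simp only [hβ', mul_smul, ← smul_add, hcyc, smul_zero]
  have hmul := sl2Coords_conMul h2 bk β hβ
  refine ⟨fun X ↦ ?_, fun X Y ↦ ?_, fun X Y Z _ ↦ ?_, fun X Y Z W ↦ ?_, fun A A' ↦ ?_⟩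
  · apply sl2Coords_injective
    rw [hmul, coordMul_self alt skew, map_zero]
  · apply sl2Coords_injective
    rw [map_neg, hmul, hmul, coordMul_anticomm skew]
  · apply sl2Coords_injective
    simp only [map_add, hmul, coordMul_add_left]
  · apply sl2Coords_injective
    simp only [map_add, hmul]
    exact coordMul_malcev skew cyc _ _ _ _
  · refine Prod.ext (Subtype.ext ?_) ?_
    · ext i j
      fin_cases i <;> fin_cases j <;> simp [conMul, conMulMat, hzero]
    · simp [conMul, actV]

end
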